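/- Let L be a finite-dimensional simple Leibniz algebra over ℂ, and suppose L = G ⊕ I as vector spaces, where G is a subalgebra of L that is a simple Lie algebra under the restricted bracket and I is the ideal generated by squares; let n = dim G and m = dim I. Then every derivation d of L can be written as d = R_a + α + Δ with a ∈ G, α a linear map vanishing on G and acting as λ·id on I for some λ ∈ ℂ, and Δ a linear map with Δ(I) = 0 and Δ(G) ⊆ I. Moreover, if n ≠ m then Δ = 0, and if n = m then either Δ(G) = I or Δ(G) = 0. -/

import Mathlib

/-!
Write `I` for the ideal generated by the squares. The right annihilator `{z | [x, z] = 0 for all x}`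
is an ideal containing all squares, so `[L, I] = 0` (`br_squaresIdeal_right`), and every derivation
preserves `I` (`derivation_mem_squaresIdeal`). Consequently the `G`-component of `d` restricted to
`G` is a derivation of the simple Lie algebra `G`. By Cartan's criterion and the theorem that
derivations of Killing Lie algebras are inner, it has the form `g ↦ [g, a]` with `a ∈ G`
(`exists_inner`).

The derivation `E = d - R_a` then maps `L` into `I`, and since `[L, I] = 0` the derivation rule
collapses to `E [x, y] = [E x, y]`: the map `E` is equivariant for the right action of `L`.
A subspace of `I` stable under the right action is an ideal of `L`, so by simplicity it is `0`
or `I`. Hence `E` is a scalar on `I` by Schur's lemma (`exists_scalar`), and the image `E(G)` is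
`0` or `I`. The kernel of `E` in `G` is an ideal of the simple Lie algebra `G`, so a nonzero `E|_G`
is an isomorphism from `G` onto `I`, which forces the dimensions to agree. With `π` the projection
onto `G` along `I`, the required maps are `α = λ (1 - π)` and `Δ = E ∘ π`.
-/

/-- `J` is a (two-sided) ideal of the Leibniz algebra `(L, br)`. -/
def IsLeibnizIdeal {L : Type*} [AddCommGroup L] [Module ℂ L]
    (br : L →ₗ[ℂ] L →ₗ[ℂ] L) (J : Submodule ℂ L) : Prop :=
  (∀ a ∈ J, ∀ y : L, br a y ∈ J) ∧ (∀ a ∈ J, ∀ y : L, br y a ∈ J)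

/-- The ideal of the Leibniz algebra `(L, br)` generated by the squares `[x,x]`. -/
def squaresIdeal {L : Type*} [AddCommGroup L] [Module ℂ L]
    (br : L →ₗ[ℂ] L →ₗ[ℂ] L) : Submodule ℂ L :=
  sInf {J | (∀ x : L, br x x ∈ J) ∧ IsLeibnizIdeal br J}

/-- The Leibniz algebra `(L, br)` is simple. -/
def IsSimpleLeibniz {L : Type*} [AddCommGroup L] [Module ℂ L]
    (br : L →ₗ[ℂ] L →ₗ[ℂ] L) : Prop :=
  (∀ J : Submodule ℂ L, IsLeibnizIdeal br J → J = ⊥ ∨ J = squaresIdeal br ∨ J = ⊤) ∧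
  Submodule.span ℂ {z : L | ∃ x y : L, z = br x y} ≠ squaresIdeal br

section SquaresIdeal

variable {L : Type*} [AddCommGroup L] [Module ℂ L] {br : L →ₗ[ℂ] L →ₗ[ℂ] L}

lemma sq_mem_squaresIdeal (x : L) : br x x ∈ squaresIdeal br := by
  rw [squaresIdeal, Submodule.mem_sInf]
  exact fun J hJ => hJ.1 x

lemma squaresIdeal_isLeibnizIdeal : IsLeibnizIdeal br (squaresIdeal br) := by
  constructor <;> intro a ha y <;> rw [squaresIdeal, Submodule.mem_sInf] at * <;> intro J hJ
  · exact hJ.2.1 a (ha J hJ) y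
  · exact hJ.2.2 a (ha J hJ) y

lemma squaresIdeal_le {J : Submodule ℂ L} (h : ∀ x : L, br x x ∈ J) (hJ : IsLeibnizIdeal br J) :
    squaresIdeal br ≤ J :=
  sInf_le ⟨h, hJ⟩

/-- The ideal of squares lies in the right annihilator, which is itself an ideal containing all
squares. -/
lemma br_squaresIdeal_right
    (hLeib : ∀ x y z : L, br x (br y z) = br (br x y) z - br (br x z) y)
    (x : L) {v : L} (hv : v ∈ squaresIdeal br) : br x v = 0 := by
  have key : squaresIdeal br ≤ LinearMap.ker br.flip := by
    refine squaresIdeal_le (fun y => ?_) ⟨fun a ha y => ?_, fun a ha y => ?_⟩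
    · ext z
      simp [hLeib]
    · have h0 : ∀ z, br z a = 0 := fun z => by simpa using LinearMap.congr_fun ha z
      ext z
      simp [hLeib, h0]
    · have h0 : ∀ z, br z a = 0 := fun z => by simpa using LinearMap.congr_fun ha z
      simp [h0]
  simpa using LinearMap.congr_fun (key hv) x

lemma derivation_mem_squaresIdeal {d : L →ₗ[ℂ] L}
    (hd : ∀ x y : L, d (br x y) = br (d x) y + br x (d y)) {v : L} (hv : v ∈ squaresIdeal br) :
    d v ∈ squaresIdeal br := by
  have hI := squaresIdeal_isLeibnizIdeal (br := br)
  have key : squaresIdeal br ≤ squaresIdeal br ⊓ (squaresIdeal br).comap d := by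
    refine squaresIdeal_le (fun y => ⟨sq_mem_squaresIdeal y, ?_⟩)
      ⟨fun a ha y => ⟨hI.1 a ha.1 y, ?_⟩, fun a ha y => ⟨hI.2 a ha.1 y, ?_⟩⟩
    · -- The polarisation `[dy, y] + [y, dy]` is a combination of squares.
      have h1 := sq_mem_squaresIdeal (br := br) (y + d y)
      have h2 := sub_mem (sub_mem h1 (sq_mem_squaresIdeal y)) (sq_mem_squaresIdeal (d y))
      have h3 : br (y + d y) (y + d y) - br y y - br (d y) (d y) = d (br y y) := by
        rw [hd]
        simp only [map_add, LinearMap.add_apply]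
        abel
      rw [h3] at h2
      exact h2
    · change d (br a y) ∈ squaresIdeal br
      rw [hd]
      exact add_mem (hI.1 _ ha.2 _) (hI.1 _ ha.1 _)
    · change d (br y a) ∈ squaresIdeal br
      rw [hd]
      exact add_mem (hI.2 _ ha.1 _) (hI.2 _ ha.2 _)
  exact (key hv).2

/-- In a simple Leibniz algebra the ideal of squares is irreducible for the right action. -/
lemma eq_bot_or_eq_squaresIdeal
    (hLeib : ∀ x y z : L, br x (br y z) = br (br x y) z - br (br x z) y)
    (hSimple : IsSimpleLeibniz br) {J : Submodule ℂ L} (hJ : J ≤ squaresIdeal br)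
    (hst : ∀ v ∈ J, ∀ y : L, br v y ∈ J) : J = ⊥ ∨ J = squaresIdeal br := by
  rcases hSimple.1 J ⟨hst, fun a ha y => by
    simp [br_squaresIdeal_right hLeib y (hJ ha)]⟩ with h | h | h
  · exact Or.inl h
  · exact Or.inr h
  · exact Or.inr (le_antisymm hJ (h ▸ le_top))

/-- Schur's lemma: an equivariant map preserving the ideal of squares acts on it as a scalar. -/
lemma exists_scalar [FiniteDimensional ℂ L]
    (hLeib : ∀ x y z : L, br x (br y z) = br (br x y) z - br (br x z) y)
    (hSimple : IsSimpleLeibniz br) {E : L →ₗ[ℂ] L}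
    (hE : ∀ v ∈ squaresIdeal br, E v ∈ squaresIdeal br)
    (hequi : ∀ x y : L, E (br x y) = br (E x) y) :
    ∃ lam : ℂ, ∀ v ∈ squaresIdeal br, E v = lam • v := by
  rcases subsingleton_or_nontrivial (squaresIdeal br) with hs | hs
  · refine ⟨0, fun v hv => ?_⟩
    have h0 : (⟨v, hv⟩ : squaresIdeal br) = 0 := Subsingleton.elim _ _
    have : v = 0 := congrArg Subtype.val h0
    simp [this]
  · obtain ⟨lam, hlam⟩ := Module.End.exists_eigenvalue (E.restrict hE)
    obtain ⟨w, hw, hw0⟩ := hlam.exists_hasEigenvector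
    rw [Module.End.mem_eigenspace_iff] at hw
    have hw' : E w = lam • (w : L) := by simpa using congrArg Subtype.val hw
    have hJ := eq_bot_or_eq_squaresIdeal hLeib hSimple
      (J := squaresIdeal br ⊓ LinearMap.ker (E - lam • LinearMap.id)) inf_le_left
      (fun v hv y => ⟨squaresIdeal_isLeibnizIdeal.1 _ hv.1 y, by
        have hv2 : E v = lam • v := by simpa [sub_eq_zero] using hv.2
        simp [hequi, hv2]⟩)
    rcases hJ with h | h
    · have hmem : (w : L) ∈ squaresIdeal br ⊓ LinearMap.ker (E - lam • LinearMap.id) :=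
        ⟨w.2, by simp [hw']⟩
      rw [h, Submodule.mem_bot] at hmem
      exact absurd (Subtype.ext hmem) hw0
    · refine ⟨lam, fun v hv => ?_⟩
      rw [← h] at hv
      simpa [sub_eq_zero] using hv.2

end SquaresIdeal

section Inner

/-- The bracket of `L` restricted to a subalgebra `G` on which it is antisymmetric, as a Lie
ring. -/
abbrev restrictedLieRing {L : Type*} [AddCommGroup L] [Module ℂ L]
    (br : L →ₗ[ℂ] L →ₗ[ℂ] L)
    (hLeib : ∀ x y z : L, br x (br y z) = br (br x y) z - br (br x z) y)
    (G : Submodule ℂ L)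
    (hGclosed : ∀ x ∈ G, ∀ y ∈ G, br x y ∈ G)
    (hGanti : ∀ x ∈ G, ∀ y ∈ G, br x y = - br y x) : LieRing G where
  bracket x y := ⟨br x y, hGclosed _ x.2 _ y.2⟩
  add_lie x y z := Subtype.ext (by simp)
  lie_add x y z := Subtype.ext (by simp)
  lie_self x := Subtype.ext (by
    -- Antisymmetry gives `[x, x] = -[x, x]`, and the characteristic is not two.
    have h := hGanti x x.2 x x.2
    have : IsAddTorsionFree L := .of_isTorsionFree ℂ L
    exact self_eq_neg.mp h)
  leibniz_lie x y z := Subtype.ext (by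
    change br x (br y z) = br (br x y) z + br y (br x z)
    rw [hLeib x y z, hGanti y y.2 _ (hGclosed _ x.2 _ z.2), sub_eq_add_neg])

/-- Every derivation of a finite-dimensional complex simple Lie algebra is inner. -/
lemma LieAlgebra.IsSimple.exists_inner {g : Type*} [LieRing g] [LieAlgebra ℂ g]
    [FiniteDimensional ℂ g] [LieAlgebra.IsSimple ℂ g] (D : g →ₗ[ℂ] g)
    (hD : ∀ x y : g, D ⁅x, y⁆ = ⁅D x, y⁆ + ⁅x, D y⁆) : ∃ a : g, ∀ x, D x = ⁅x, a⁆ := by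
  let D' : LieDerivation ℂ g g :=
    { D with
      leibniz' := fun x y => by
        change D ⁅x, y⁆ = ⁅x, D y⁆ - ⁅y, D x⁆
        rw [hD, ← lie_skew y (D x)]
        abel }
  obtain ⟨a, ha⟩ := LieDerivation.IsKilling.exists_eq_ad D'
  refine ⟨-a, fun x => ?_⟩
  have h : LieDerivation.ad ℂ g a x = D x := by rw [ha]; rfl
  rw [← h, lie_neg, lie_skew]
  simp

lemma exists_inner {L : Type*} [AddCommGroup L] [Module ℂ L] [FiniteDimensional ℂ L]
    (br : L →ₗ[ℂ] L →ₗ[ℂ] L)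
    (hLeib : ∀ x y z : L, br x (br y z) = br (br x y) z - br (br x z) y)
    (G : Submodule ℂ L)
    (hGclosed : ∀ x ∈ G, ∀ y ∈ G, br x y ∈ G)
    (hGanti : ∀ x ∈ G, ∀ y ∈ G, br x y = - br y x)
    (hGsimpleLie :
      (∀ J : Submodule ℂ L, J ≤ G → (∀ a ∈ J, ∀ g ∈ G, br a g ∈ J) → J = ⊥ ∨ J = G) ∧
      ∃ x ∈ G, ∃ y ∈ G, br x y ≠ 0)
    (D : L →ₗ[ℂ] L) (hDG : ∀ x ∈ G, D x ∈ G)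
    (hD : ∀ x ∈ G, ∀ y ∈ G, D (br x y) = br (D x) y + br x (D y)) :
    ∃ a ∈ G, ∀ x ∈ G, D x = br x a := by
  let _ : LieRing G := restrictedLieRing br hLeib G hGclosed hGanti
  let _ : LieAlgebra ℂ G :=
    { lie_smul := fun t x y => Subtype.ext (by
        change br x (t • (y : L)) = t • br x y
        simp) }
  have hbr : ∀ x y : G, ((⁅x, y⁆ : G) : L) = br x y := fun _ _ => rfl
  have hs : LieAlgebra.IsSimple ℂ G :=
    { eq_bot_or_eq_top := fun J => by
        have hJ := hGsimpleLie.1 (J.toSubmodule.map G.subtype) (Submodule.map_subtype_le _ _) (by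
          rintro _ ⟨a, ha, rfl⟩ g hg
          exact ⟨⁅a, ⟨g, hg⟩⁆, lie_mem_left ℂ G J a ⟨g, hg⟩ ha, rfl⟩)
        rcases hJ with h | h
        · left
          rw [← LieSubmodule.toSubmodule_eq_bot]
          exact Submodule.map_injective_of_injective G.subtype_injective
            (h.trans (Submodule.map_bot _).symm)
        · right
          rw [← LieSubmodule.toSubmodule_eq_top]
          apply Submodule.map_injective_of_injective G.subtype_injective
          rw [h, Submodule.map_subtype_top]
      non_abelian := fun hab => by
        obtain ⟨x, hx, y, hy, hxy⟩ := hGsimpleLie.2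
        exact hxy (congrArg Subtype.val (hab.trivial (⟨x, hx⟩ : G) (⟨y, hy⟩ : G))) }
  obtain ⟨a, ha⟩ := LieAlgebra.IsSimple.exists_inner (D.restrict hDG)
    (fun x y => Subtype.ext (hD x x.2 y y.2))
  exact ⟨a, a.2, fun x hx => congrArg Subtype.val (ha ⟨x, hx⟩)⟩

end Inner

/-- Any derivation of a finite-dimensional complex simple Leibniz
algebra `L = G ⊕ I` decomposes as `R_a + α + Δ`; moreover if `dim G ≠ dim I` then `Δ = 0`,
and if `dim G = dim I` then `Δ(G) = I` or `Δ(G) = 0`. -/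
theorem derivation_of_complex_simple_leibniz_dim
    {L : Type*} [AddCommGroup L] [Module ℂ L] [FiniteDimensional ℂ L]
    (br : L →ₗ[ℂ] L →ₗ[ℂ] L)
    (hLeib : ∀ x y z : L, br x (br y z) = br (br x y) z - br (br x z) y)
    (hSimple : IsSimpleLeibniz br)
    (G : Submodule ℂ L)
    (hGclosed : ∀ x ∈ G, ∀ y ∈ G, br x y ∈ G)
    (hGanti : ∀ x ∈ G, ∀ y ∈ G, br x y = - br y x)
    (hGsimpleLie :
      (∀ J : Submodule ℂ L, J ≤ G → (∀ a ∈ J, ∀ g ∈ G, br a g ∈ J) → J = ⊥ ∨ J = G) ∧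
      ∃ x ∈ G, ∃ y ∈ G, br x y ≠ 0)
    (hdirect : G ⊓ squaresIdeal br = ⊥ ∧ G ⊔ squaresIdeal br = ⊤)
    (d : L →ₗ[ℂ] L)
    (hd : ∀ x y : L, d (br x y) = br (d x) y + br x (d y))
    (n m : ℕ) (hn : n = Module.finrank ℂ G) (hm : m = Module.finrank ℂ (squaresIdeal br)) :
    ∃ a ∈ G, ∃ α Δ : L →ₗ[ℂ] L, ∃ lam : ℂ,
      d = br.flip a + α + Δ ∧
      (∀ g ∈ G, α g = 0) ∧
      (∀ v ∈ squaresIdeal br, α v = lam • v) ∧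
      (∀ v ∈ squaresIdeal br, Δ v = 0) ∧
      (∀ g ∈ G, Δ g ∈ squaresIdeal br) ∧
      (n ≠ m → Δ = 0) ∧
      (n = m → Submodule.map Δ G = squaresIdeal br ∨ Submodule.map Δ G = ⊥) := by
  have hI := squaresIdeal_isLeibnizIdeal (br := br)
  have hZ := fun x v hv => br_squaresIdeal_right hLeib x (v := v) hv
  obtain ⟨π, hπG, hπI, hπg, hπv⟩ : ∃ π : L →ₗ[ℂ] L, (∀ x, π x ∈ G) ∧
      (∀ x, x - π x ∈ squaresIdeal br) ∧ (∀ g ∈ G, π g = g) ∧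
      (∀ v ∈ squaresIdeal br, π v = 0) := by
    have hc : IsCompl G (squaresIdeal br) :=
      ⟨disjoint_iff.mpr hdirect.1, codisjoint_iff.mpr hdirect.2⟩
    have h1 : ∀ g ∈ G, G.projection _ hc g = g := fun g hg =>
      Submodule.projection_apply_left hc ⟨g, hg⟩
    have h2 : ∀ v ∈ squaresIdeal br, G.projection _ hc v = 0 := fun v hv =>
      (Submodule.projection_apply_eq_zero_iff hc).mpr hv
    refine ⟨G.projection _ hc, fun x => Submodule.projection_apply_mem hc x, fun x => ?_, h1, h2⟩
    rw [← Submodule.projection_apply_eq_zero_iff hc, map_sub, h1 _ (Submodule.projection_apply_mem hc x), sub_self]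
  have hπbr : ∀ x, ∀ y ∈ G, π (br x y) = br (π x) y := fun x y hy => by
    have h1 : br x y = br (π x) y + br (x - π x) y := by simp
    rw [h1, map_add, hπv _ (hI.1 _ (hπI x) y), hπg _ (hGclosed _ (hπG x) _ hy), add_zero]
  have hbrπ : ∀ x y, br x (π y) = br x y := fun x y => by
    have h1 := hZ x _ (hπI y)
    rw [map_sub, sub_eq_zero] at h1
    exact h1.symm
  obtain ⟨a, haG, ha⟩ := exists_inner br hLeib G hGclosed hGanti hGsimpleLie (π ∘ₗ d)
    (fun x _ => hπG _) (fun x hx y hy => by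
      simp only [LinearMap.comp_apply]
      rw [hd, map_add, hπbr _ y hy, hbrπ, ← hbrπ x (d y), hπg _ (hGclosed _ hx _ (hπG _))])
  let E : L →ₗ[ℂ] L := d - br.flip a
  have hEdef : ∀ x, E x = d x - br x a := fun x => rfl
  have hEv : ∀ v ∈ squaresIdeal br, E v ∈ squaresIdeal br := fun v hv =>
    sub_mem (derivation_mem_squaresIdeal hd hv) (hI.1 v hv a)
  have hEg : ∀ g ∈ G, E g ∈ squaresIdeal br := fun g hg => by
    rw [hEdef, ← ha g hg]
    exact hπI (d g)
  have hEL : ∀ x, E x ∈ squaresIdeal br := fun x => by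
    have h1 : E x = E (π x) + E (x - π x) := by simp
    rw [h1]
    exact add_mem (hEg _ (hπG x)) (hEv _ (hπI x))
  have hequi : ∀ x y, E (br x y) = br (E x) y := fun x y => by
    have h1 := hZ x _ (hEL y)
    rw [hEdef, map_sub, hLeib, sub_eq_zero] at h1
    rw [hEdef, hEdef, hd, h1, map_sub, LinearMap.sub_apply]
    abel
  obtain ⟨lam, hlam⟩ := exists_scalar hLeib hSimple hEv hequi
  have hΔg : ∀ g ∈ G, (E ∘ₗ π) g = E g := fun g hg => by simp [hπg g hg]
  have hmap : Submodule.map (E ∘ₗ π) G = Submodule.map E G := by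
    ext z
    constructor
    · rintro ⟨g, hg, rfl⟩
      exact ⟨g, hg, (hΔg g hg).symm⟩
    · rintro ⟨g, hg, rfl⟩
      exact ⟨g, hg, hΔg g hg⟩
  have himg : Submodule.map E G = squaresIdeal br ∨ Submodule.map E G = ⊥ := by
    refine (eq_bot_or_eq_squaresIdeal hLeib hSimple ?_ ?_).symm
    · rintro _ ⟨g, _, rfl⟩
      exact hEL g
    · rintro _ ⟨g, hg, rfl⟩ y
      refine ⟨br g (π y), hGclosed _ hg _ (hπG y), ?_⟩
      rw [hequi, hbrπ]
  refine ⟨a, haG, lam • (LinearMap.id - π), E ∘ₗ π, lam, ?_, ?_, ?_, ?_, ?_, ?_, ?_⟩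
  · ext x
    have h1 : E x = E (π x) + E (x - π x) := by simp
    rw [hlam _ (hπI x), hEdef, sub_eq_iff_eq_add] at h1
    rw [h1]
    simp only [LinearMap.add_apply, LinearMap.flip_apply, LinearMap.smul_apply,
      LinearMap.sub_apply, LinearMap.id_apply, LinearMap.comp_apply]
    abel
  · intro g hg
    simp [hπg g hg]
  · intro v hv
    simp [hπv v hv]
  · intro v hv
    simp [hπv v hv]
  · intro g _
    exact hEL _
  · intro hnm
    have hzero : ∀ g ∈ G, E g = 0 := by
      rcases himg with h | h
      · have hker := hGsimpleLie.1 (G ⊓ LinearMap.ker E) inf_le_left (fun x hx g hg =>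
          ⟨hGclosed _ hx.1 _ hg, by
            have hx2 : E x = 0 := hx.2
            simp [hequi, hx2]⟩)
        rcases hker with hk | hk
        · -- `E` maps `G` bijectively onto the ideal of squares.
          refine absurd ?_ hnm
          rw [hn, hm, ← h]
          have hinj : Function.Injective (E.domRestrict G) := by
            rw [LinearMap.injective_domRestrict_iff, disjoint_iff]
            exact hk
          rw [← LinearMap.finrank_range_of_inj hinj, LinearMap.range_domRestrict]
        · intro g hg
          rw [← hk] at hg
          exact hg.2
      · intro g hg
        have : E g ∈ Submodule.map E G := ⟨g, hg, rfl⟩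
        rwa [h, Submodule.mem_bot] at this
    ext x
    exact hzero _ (hπG x)
  · intro _
    rw [hmap]
    exact himg
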